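/- Let G be an n-vertex graph of density p > 0, let P = {V₁,…,V_k} be a partition of V(G), and let Q be a refinement of P. If D(Q,P) ≥ x·p·n² for some x ≥ 0, then H(Q) − H(P) ≥ 2x²p. -/

import Mathlib

open Finset
open scoped Classical

/-- `eCnt G A B` is the number of ordered pairs `(u,v) ∈ A × B` with `uv` an edge of `G`. -/
noncomputable def eCnt {V : Type*} [Fintype V] (G : SimpleGraph V) (A B : Finset V) : ℕ :=
  ((A ×ˢ B).filter fun p => G.Adj p.1 p.2).card

/-- The edge density `d(A,B)` between vertex subsets `A` and `B`. -/
noncomputable def dens {V : Type*} [Fintype V] (G : SimpleGraph V) (A B : Finset V) : ℝ :=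
  eCnt G A B / (A.card * B.card)

/-- The function `H(x) = x ln x` (with `0 ln 0 = 0`, which holds for `Real.log`). -/
noncomputable def Hent (x : ℝ) : ℝ := x * Real.log x

/-- The entropy potential `H(P,P')` of a partition `P` of `A ⊆ V(G)` and a partition `P'`
of `A' ⊆ V(G)`: `H(P,P') = Σ_{W ∈ P, W' ∈ P'} (|W||W'|/(|A||A'|))·H(d(W,W'))`. -/
noncomputable def pot {V : Type*} [Fintype V] [DecidableEq V] (G : SimpleGraph V)
    {A A' : Finset V} (P : Finpartition A) (P' : Finpartition A') : ℝ :=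
  ∑ W ∈ P.parts, ∑ W' ∈ P'.parts,
    ((W.card : ℝ) * W'.card / ((A.card : ℝ) * A'.card)) * Hent (dens G W W')

/-- The density `d_G = 2|E|/|V|²` of a graph. -/
noncomputable def graphDensity {V : Type*} [Fintype V] (G : SimpleGraph V) : ℝ :=
  2 * G.edgeSet.ncard / (Fintype.card V : ℝ) ^ 2

/-- The `ℓ₁`-distance `D(Q,P)` between a partition `P` of the vertex set and a
refinement `Q` of it:
`D(Q,P) = (1/2)·Σ_{V_i,V_j ∈ P} Σ_{U ∈ Q|_{V_i}, U' ∈ Q|_{V_j}} |U||U'|·|d(U,U') − d(V_i,V_j)|`,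
where `Q|_{V}` consists of the parts of `Q` contained in `V`. -/
noncomputable def Ddist {V : Type*} [Fintype V] [DecidableEq V] (G : SimpleGraph V)
    {s : Finset V} (Q P : Finpartition s) : ℝ :=
  (1 / 2) * ∑ Vi ∈ P.parts, ∑ Vj ∈ P.parts,
    ∑ U ∈ Q.parts.filter (· ⊆ Vi), ∑ U' ∈ Q.parts.filter (· ⊆ Vj),
      (U.card : ℝ) * U'.card * |dens G U U' - dens G Vi Vj|

/-!
Regard a pair of partitions `P`, `P'` of `A`, `A'` as the step function on `A × A'` whose value at
`(u, v)` is the density between the parts of `u` and `v`. Then `|A||A'| pot G P P'` is the sum of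
`d log d` over this function `d`, twice the `ℓ₁`-distance of a refinement is the genuine
`ℓ₁`-distance between two step functions, and, because refining does not change the sum over a
block of the coarser partition, the increase of the potential is the relative entropy of the finer
step function with respect to the coarser one. Both have total mass `e(A, A')`, so the theorem is
Pinsker's inequality `‖f - g‖₁² ≤ 2 ‖f‖₁ ∑ f log (f / g)`. The latter follows by Cauchy–Schwarz from
the pointwise bound `3 (t - 1)² ≤ 2 (t + 2) (t log t + 1 - t)`, in which the difference of the two
sides is convex and critical at `t = 1`.
-/

section Pinsker

open InformationTheory

lemma hasDerivAt_two_mul_add_two_mul_klFun_sub {t : ℝ} (ht : t ≠ 0) :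
    HasDerivAt (fun t : ℝ ↦ 2 * (t + 2) * klFun t - 3 * (t - 1) ^ 2)
      (2 * klFun t + 2 * (t + 2) * Real.log t - 6 * (t - 1)) t := by
  have hlin := ((hasDerivAt_id' t).add_const 2).const_mul 2
  have hquad := (((hasDerivAt_id' t).sub_const 1).pow 2).const_mul 3
  refine ((hlin.mul (hasDerivAt_klFun ht)).sub hquad).congr_deriv ?_
  push_cast
  ring

lemma convexOn_two_mul_add_two_mul_klFun_sub :
    ConvexOn ℝ (Set.Ici 0) fun t : ℝ ↦ 2 * (t + 2) * klFun t - 3 * (t - 1) ^ 2 := by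
  refine convexOn_of_hasDerivWithinAt2_nonneg (convex_Ici 0)
    (f' := fun t ↦ 2 * klFun t + 2 * (t + 2) * Real.log t - 6 * (t - 1))
    (f'' := fun t ↦ 4 * (Real.log t - (1 - t⁻¹)))
    (by fun_prop) ?_ ?_ ?_ <;> rw [interior_Ici] <;> intro t (ht : 0 < t)
  · exact (hasDerivAt_two_mul_add_two_mul_klFun_sub ht.ne').hasDerivWithinAt
  · have hlin := ((hasDerivAt_id' t).add_const 2).const_mul 2
    refine ((((hasDerivAt_klFun ht.ne').const_mul 2).add
      (hlin.mul (Real.hasDerivAt_log ht.ne'))).sub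
      (((hasDerivAt_id' t).sub_const 1).const_mul 6)).hasDerivWithinAt.congr_deriv ?_
    field_simp
    ring
  · exact mul_nonneg zero_le_four (sub_nonneg.2 (Real.one_sub_inv_le_log_of_pos ht))

lemma three_mul_sub_one_sq_le_mul_klFun {t : ℝ} (ht : 0 ≤ t) :
    3 * (t - 1) ^ 2 ≤ 2 * (t + 2) * klFun t := by
  have hderiv : HasDerivAt (fun t : ℝ ↦ 2 * (t + 2) * klFun t - 3 * (t - 1) ^ 2) 0 1 :=
    (hasDerivAt_two_mul_add_two_mul_klFun_sub one_ne_zero).congr_deriv (by simp [klFun_one])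
  have hmin := convexOn_two_mul_add_two_mul_klFun_sub.isMinOn_of_rightDeriv_eq_zero (by simp)
    (hderiv.hasDerivWithinAt.derivWithin (uniqueDiffWithinAt_Ioi 1))
  have h : (0 : ℝ) ≤ 2 * (t + 2) * klFun t - 3 * (t - 1) ^ 2 := by
    simpa [klFun_one] using hmin ht
  exact sub_nonneg.1 h

lemma mul_klFun_div {a b : ℝ} (hab : b = 0 → a = 0) :
    b * klFun (a / b) = a * Real.log (a / b) + b - a := by
  rcases eq_or_ne b 0 with rfl | hb
  · simp [hab rfl]
  · rw [klFun_apply]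
    field_simp

lemma sub_sq_le_mul_klFun_div {a b : ℝ} (ha : 0 ≤ a) (hb : 0 ≤ b) (hab : b = 0 → a = 0) :
    (a - b) ^ 2 ≤ 2 / 3 * (a + 2 * b) * (b * klFun (a / b)) := by
  rcases hb.eq_or_lt' with rfl | hb
  · simp [hab rfl]
  · have h := mul_le_mul_of_nonneg_left
      (three_mul_sub_one_sq_le_mul_klFun (div_nonneg ha hb.le)) (sq_nonneg b)
    have hl : b ^ 2 * (3 * (a / b - 1) ^ 2) = 3 * (a - b) ^ 2 := by field_simp
    have hr : b ^ 2 * (2 * (a / b + 2) * klFun (a / b))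
        = 2 * (a + 2 * b) * (b * klFun (a / b)) := by field_simp
    linarith

theorem sq_sum_abs_sub_le_two_mul_sum_mul_log_div {ι : Type*} {s : Finset ι} {f g : ι → ℝ}
    (hf : ∀ i ∈ s, 0 ≤ f i) (hg : ∀ i ∈ s, 0 ≤ g i) (hfg : ∀ i ∈ s, g i = 0 → f i = 0)
    (hsum : ∑ i ∈ s, f i = ∑ i ∈ s, g i) :
    (∑ i ∈ s, |f i - g i|) ^ 2
      ≤ 2 * (∑ i ∈ s, f i) * ∑ i ∈ s, f i * Real.log (f i / g i) := by
  have hkl : ∑ i ∈ s, g i * klFun (f i / g i) = ∑ i ∈ s, f i * Real.log (f i / g i) := by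
    rw [sum_congr rfl fun i hi ↦ mul_klFun_div (hfg i hi), sum_sub_distrib, sum_add_distrib, hsum,
      add_sub_cancel_right]
  have hmass : ∑ i ∈ s, 2 / 3 * (f i + 2 * g i) = 2 * ∑ i ∈ s, f i := by
    rw [← mul_sum, sum_add_distrib, ← mul_sum, ← hsum]
    ring
  rw [← hkl, ← hmass]
  refine sum_sq_le_sum_mul_sum_of_sq_le_mul s (fun i hi ↦ ?_) (fun i hi ↦ ?_) fun i hi ↦ ?_
  · linarith [hf i hi, hg i hi]
  · exact mul_nonneg (hg i hi) (klFun_nonneg (div_nonneg (hf i hi) (hg i hi)))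
  · rw [sq_abs]
    exact sub_sq_le_mul_klFun_div (hf i hi) (hg i hi) (hfg i hi)

end Pinsker

section Partition

variable {α β M : Type*} [DecidableEq α] [DecidableEq β] [AddCommMonoid M]
  {s : Finset α} {t : Finset β} {P Q : Finpartition s}

lemma sum_parts_sum (P : Finpartition s) (f : Finset α → α → M) :
    ∑ W ∈ P.parts, ∑ a ∈ W, f W a = ∑ a ∈ s, f (P.part a) a := by
  rw [← sum_fiberwise_of_maps_to fun a ha ↦ P.part_mem.2 ha]
  refine sum_congr rfl fun W hW ↦ sum_congr ?_ fun a ha ↦ ?_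
  · ext a
    rw [mem_filter, P.part_eq_iff_mem hW]
    exact ⟨fun ha ↦ ⟨P.le hW ha, ha⟩, And.right⟩
  · rw [(mem_filter.1 ha).2]

lemma sum_parts_sum_sum (P : Finpartition s) (R : Finpartition t)
    (f : Finset α → Finset β → α → β → M) :
    ∑ W ∈ P.parts, ∑ X ∈ R.parts, ∑ a ∈ W, ∑ b ∈ X, f W X a b
      = ∑ a ∈ s, ∑ b ∈ t, f (P.part a) (R.part b) a b := by
  calc
    _ = ∑ W ∈ P.parts, ∑ a ∈ W, ∑ X ∈ R.parts, ∑ b ∈ X, f W X a b :=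
      sum_congr rfl fun _ _ ↦ sum_comm
    _ = _ := by simp only [sum_parts_sum R fun X b ↦ f _ X _ b, sum_parts_sum P fun W a ↦
      ∑ b ∈ t, f W (R.part b) a b]

lemma sum_parts_card_mul_card_mul (P : Finpartition s) (R : Finpartition t)
    (φ : Finset α → Finset β → ℝ) :
    ∑ W ∈ P.parts, ∑ X ∈ R.parts, (W.card : ℝ) * X.card * φ W X
      = ∑ a ∈ s, ∑ b ∈ t, φ (P.part a) (R.part b) := by
  rw [← sum_parts_sum_sum P R fun W X _ _ ↦ φ W X]
  simp only [sum_const, nsmul_eq_mul, mul_assoc]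

lemma part_subset_part (hQP : Q ≤ P) (a : α) : Q.part a ⊆ P.part a := by
  by_cases ha : a ∈ s
  · obtain ⟨W, hW, hQW⟩ := hQP (Q.part_mem.2 ha)
    rwa [P.part_eq_of_mem hW (hQW (Q.mem_part_self.2 ha))]
  · simp [Q.part_eq_empty.2 ha]

/-- The partition `Q|_W` of a part `W` of `P` induced by a refinement `Q` of `P`. -/
def inducedOn (hQP : Q ≤ P) {W : Finset α} (hW : W ∈ P.parts) : Finpartition W :=
  Q.ofSubset (filter_subset (· ⊆ W) Q.parts) <| by
    refine le_antisymm (Finset.sup_le fun U hU ↦ (mem_filter.1 hU).2) fun a ha ↦ ?_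
    have has : a ∈ s := P.le hW ha
    refine mem_sup.2 ⟨Q.part a, mem_filter.2 ⟨Q.part_mem.2 has, ?_⟩, Q.mem_part_self.2 has⟩
    exact P.part_eq_of_mem hW ha ▸ part_subset_part hQP a

lemma inducedOn_part (hQP : Q ≤ P) {W : Finset α} (hW : W ∈ P.parts) {a : α} (ha : a ∈ W) :
    (inducedOn hQP hW).part a = Q.part a := by
  have hmem : (inducedOn hQP hW).part a ∈ Q.parts :=
    filter_subset _ _ ((inducedOn hQP hW).part_mem.2 ha)
  exact (Q.part_eq_of_mem hmem ((inducedOn hQP hW).mem_part_self.2 ha)).symm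

end Partition

section Density

variable {V : Type*} [Fintype V] (G : SimpleGraph V) {A A' : Finset V}

lemma eCnt_eq_card_interedges (A B : Finset V) : eCnt G A B = (G.interedges A B).card := rfl

lemma dens_nonneg (A B : Finset V) : 0 ≤ dens G A B := by
  unfold _root_.dens
  positivity

lemma card_mul_card_mul_dens (A B : Finset V) :
    (A.card : ℝ) * B.card * dens G A B = eCnt G A B := by
  refine mul_div_cancel_of_imp' fun h ↦ ?_
  have hle : eCnt G A B ≤ A.card * B.card := G.card_interedges_le_mul A B
  have hcard : A.card * B.card = 0 := mod_cast h
  exact_mod_cast Nat.le_zero.1 (hcard ▸ hle)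

lemma dens_eq_zero_iff {A B : Finset V} : dens G A B = 0 ↔ eCnt G A B = 0 := by
  refine ⟨fun h ↦ ?_, fun h ↦ by simp [_root_.dens, h]⟩
  have hcard := card_mul_card_mul_dens G A B
  rw [h, mul_zero] at hcard
  exact_mod_cast hcard.symm

lemma dens_eq_zero_of_subset {A B C D : Finset V} (hA : A ⊆ C) (hB : B ⊆ D)
    (h : dens G C D = 0) : dens G A B = 0 := by
  rw [dens_eq_zero_iff] at h ⊢
  exact Nat.le_zero.1 (h ▸ card_le_card (G.interedges_mono hA hB))

lemma graphDensity_eq_dens_univ : graphDensity G = dens G univ univ := by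
  have hcount : eCnt G univ univ = 2 * G.edgeSet.ncard := by
    rw [← G.coe_edgeFinset, Set.ncard_coe_finset, ← G.sum_degrees_eq_twice_card_edges, eCnt,
      card_filter, sum_product]
    refine sum_congr rfl fun v _ ↦ ?_
    rw [← card_filter, ← G.card_neighborFinset_eq_degree, G.neighborFinset_eq_filter]
  rw [graphDensity, _root_.dens, hcount, card_univ]
  push_cast
  ring

variable [DecidableEq V] {P Q : Finpartition A} {P' Q' : Finpartition A'}

/-- The step function on `A × A'` attached to partitions `P` of `A` and `P'` of `A'`: its value at
`(u, v)` is the density between the part of `u` and the part of `v`. Outside `A × A'` it is `0`. -/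
noncomputable def stepDens (P : Finpartition A) (P' : Finpartition A') (u v : V) : ℝ :=
  dens G (P.part u) (P'.part v)

lemma stepDens_eq_zero_of_le (hQP : Q ≤ P) (hQP' : Q' ≤ P') {u v : V}
    (h : stepDens G P P' u v = 0) : stepDens G Q Q' u v = 0 :=
  dens_eq_zero_of_subset G (part_subset_part hQP u) (part_subset_part hQP' v) h

lemma sum_stepDens (P : Finpartition A) (P' : Finpartition A') :
    ∑ u ∈ A, ∑ v ∈ A', stepDens G P P' u v = eCnt G A A' := by
  unfold stepDens
  rw [← sum_parts_card_mul_card_mul, eCnt_eq_card_interedges, SimpleGraph.interedges,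
    Rel.card_interedges_finpartition G.Adj P P', sum_product]
  push_cast
  simp only [card_mul_card_mul_dens]
  rfl

lemma sum_stepDens_mul (hQP : Q ≤ P) (hQP' : Q' ≤ P') (φ : Finset V → Finset V → ℝ) :
    ∑ u ∈ A, ∑ v ∈ A', stepDens G Q Q' u v * φ (P.part u) (P'.part v)
      = ∑ W ∈ P.parts, ∑ W' ∈ P'.parts, eCnt G W W' * φ W W' := by
  rw [← sum_parts_sum_sum P P' fun W W' u v ↦ stepDens G Q Q' u v * φ W W']
  refine sum_congr rfl fun W hW ↦ sum_congr rfl fun W' hW' ↦ ?_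
  rw [← sum_stepDens G (inducedOn hQP hW) (inducedOn hQP' hW')]
  simp only [sum_mul]
  refine sum_congr rfl fun u hu ↦ sum_congr rfl fun v hv ↦ ?_
  rw [stepDens, stepDens, inducedOn_part hQP hW hu, inducedOn_part hQP' hW' hv]

lemma card_mul_card_mul_pot (P : Finpartition A) (P' : Finpartition A') :
    (A.card : ℝ) * A'.card * pot G P P' = ∑ u ∈ A, ∑ v ∈ A', Hent (stepDens G P P' u v) := by
  unfold stepDens
  rw [pot, ← sum_parts_card_mul_card_mul P P' fun W W' ↦ Hent (dens G W W')]
  simp only [mul_sum]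
  refine sum_congr rfl fun W hW ↦ sum_congr rfl fun W' hW' ↦ ?_
  rw [← mul_assoc, mul_div_cancel_of_imp' fun h ↦ ?_]
  have hle : W.card * W'.card ≤ A.card * A'.card :=
    Nat.mul_le_mul (card_le_card (P.le hW)) (card_le_card (P'.le hW'))
  have hcard : A.card * A'.card = 0 := mod_cast h
  exact_mod_cast Nat.le_zero.1 (hcard ▸ hle)

lemma Ddist_eq_sum_abs_stepDens_sub (hQP : Q ≤ P) :
    Ddist G Q P = 1 / 2 * ∑ u ∈ A, ∑ v ∈ A, |stepDens G Q Q u v - stepDens G P P u v| := by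
  unfold stepDens
  rw [Ddist, ← sum_parts_sum_sum P P fun W W' u v ↦
    |dens G (Q.part u) (Q.part v) - dens G W W'|]
  congr 1
  refine sum_congr rfl fun W hW ↦ sum_congr rfl fun W' hW' ↦ ?_
  refine (sum_parts_card_mul_card_mul (inducedOn hQP hW) (inducedOn hQP hW')
    fun U U' ↦ |dens G U U' - dens G W W'|).trans ?_
  refine sum_congr rfl fun u hu ↦ sum_congr rfl fun v hv ↦ ?_
  rw [inducedOn_part hQP hW hu, inducedOn_part hQP hW' hv]

lemma card_mul_card_mul_pot_sub_pot (hQP : Q ≤ P) (hQP' : Q' ≤ P') :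
    (A.card : ℝ) * A'.card * (pot G Q Q' - pot G P P') =
      ∑ u ∈ A, ∑ v ∈ A', stepDens G Q Q' u v
        * Real.log (stepDens G Q Q' u v / stepDens G P P' u v) := by
  have hcross : ∑ u ∈ A, ∑ v ∈ A', stepDens G Q Q' u v * Real.log (stepDens G P P' u v)
      = ∑ u ∈ A, ∑ v ∈ A', Hent (stepDens G P P' u v) :=
    (sum_stepDens_mul G hQP hQP' fun W W' ↦ Real.log (dens G W W')).trans
      (sum_stepDens_mul G le_rfl le_rfl _).symm
  rw [mul_sub, card_mul_card_mul_pot, card_mul_card_mul_pot, ← hcross, ← sum_sub_distrib]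
  refine sum_congr rfl fun u _ ↦ ?_
  rw [← sum_sub_distrib]
  refine sum_congr rfl fun v _ ↦ ?_
  by_cases hQ : stepDens G Q Q' u v = 0
  · simp [hQ, Hent]
  · rw [Real.log_div hQ (mt (stepDens_eq_zero_of_le G hQP hQP') hQ), mul_sub, Hent]

theorem sq_sum_abs_stepDens_sub_le (hQP : Q ≤ P) (hQP' : Q' ≤ P') :
    (∑ u ∈ A, ∑ v ∈ A', |stepDens G Q Q' u v - stepDens G P P' u v|) ^ 2
      ≤ 2 * eCnt G A A' * ((A.card : ℝ) * A'.card * (pot G Q Q' - pot G P P')) := by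
  rw [card_mul_card_mul_pot_sub_pot G hQP hQP', ← sum_stepDens G Q Q']
  simp only [← sum_product']
  refine sq_sum_abs_sub_le_two_mul_sum_mul_log_div (fun e _ ↦ dens_nonneg G _ _)
    (fun e _ ↦ dens_nonneg G _ _) (fun e _ ↦ stepDens_eq_zero_of_le G hQP hQP') ?_
  simp only [sum_product, sum_stepDens]

theorem potential_vs_l1_general (hQP : Q ≤ P) (hQP' : Q' ≤ P') (hp : 0 < dens G A A')
    {x : ℝ} (hx : 0 ≤ x)
    (hD : x * dens G A A' * (A.card * A'.card)
      ≤ 1 / 2 * ∑ u ∈ A, ∑ v ∈ A', |stepDens G Q Q' u v - stepDens G P P' u v|) :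
    2 * x ^ 2 * dens G A A' ≤ pot G Q Q' - pot G P P' := by
  set n : ℝ := A.card * A'.card with hn
  set S := ∑ u ∈ A, ∑ v ∈ A', |stepDens G Q Q' u v - stepDens G P P' u v|
  have hn0 : 0 < n := by
    refine lt_of_le_of_ne (by positivity) fun h ↦ hp.ne' ?_
    rw [_root_.dens, ← hn, ← h, div_zero]
  have hpinsker : S ^ 2 ≤ 2 * (n * dens G A A') * (n * (pot G Q Q' - pot G P P')) := by
    rw [hn, card_mul_card_mul_dens]
    exact sq_sum_abs_stepDens_sub_le G hQP hQP'
  have hS : (2 * (x * dens G A A' * n)) ^ 2 ≤ S ^ 2 := by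
    gcongr
    linarith
  refine le_of_mul_le_mul_left ?_ (show 0 < 2 * n ^ 2 * dens G A A' by positivity)
  linarith

end Density

/-- **Entropy-distance versus `ℓ₁`-distance (Lemma 3.6).**
If `G` has density `p > 0`, `Q` refines `P` and `D(Q,P) ≥ x·p·n²`, then
`H(Q) − H(P) ≥ 2x²p`. -/
theorem potential_vs_l1 {V : Type*} [Fintype V] [DecidableEq V] (G : SimpleGraph V)
    (p : ℝ) (hp : 0 < p) (hpd : graphDensity G = p)
    (P Q : Finpartition (univ : Finset V)) (hQP : Q ≤ P)
    (x : ℝ) (hx : 0 ≤ x)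
    (hD : x * p * (Fintype.card V : ℝ) ^ 2 ≤ Ddist G Q P) :
    2 * x ^ 2 * p ≤ pot G Q Q - pot G P P := by
  subst hpd
  rw [graphDensity_eq_dens_univ] at hp hD ⊢
  rw [Ddist_eq_sum_abs_stepDens_sub G hQP, ← card_univ, sq] at hD
  exact potential_vs_l1_general G hQP hQP hp hx hD
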